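/- Let ν be a shift-invariant ergodic probability measure on {0,1}^ℕ with ν ∉ {δ_{0^∞}, δ_{1^∞}}, and set V_ν = Σ_{i≥1} F_i/2^i with F_i = ν({X : X_0 ≠ X_i}). For X ∈ {0,1}^ℕ let a_X(n) = Σ_{k=0}^n X_k 2^k. Then for ν-almost every X, the rescaled measures μ̃_{X,n} defined by μ̃_{X,n}(A) = μ_{a_X(n)}(√(V_ν n)·A) converge weakly, as n → ∞, to the standard Gaussian N(0,1). -/

import Mathlib

open Filter MeasureTheory

/-- Binary sum-of-digits function. -/
def s2 (n : ℕ) : ℕ := (Nat.digits 2 n).sum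

/-- `hasDensity a d x` means `{n : s₂(n+a) - s₂(n) = d}` has asymptotic density `x`. -/
def hasDensity (a : ℕ) (d : ℤ) (x : ℝ) : Prop :=
  Tendsto (fun N : ℕ =>
      (((Finset.range N).filter (fun n => (s2 (n + a) : ℤ) - s2 n = d)).card : ℝ) / N)
    atTop (nhds x)

/-- The left shift on `{0,1}^ℕ`. -/
def shift (X : ℕ → Bool) : ℕ → Bool := fun n => X (n + 1)

/-- The integer whose binary digits are the prefix of length `n+1` of `X`. -/
def aX (X : ℕ → Bool) (n : ℕ) : ℕ :=
  ∑ k ∈ Finset.range (n + 1), (if X k then 2 ^ k else 0)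

/-- The standard Gaussian density. -/
noncomputable def stdGaussian (t : ℝ) : ℝ :=
  Real.exp (-t ^ 2 / 2) / Real.sqrt (2 * Real.pi)

/-!
Write `φ a` for the characteristic function of `μ a` at a frequency `θ`. Splitting `n` by parity
gives `φ (2a) = φ a` and `φ (2a + 1) = (exp (iθ) φ a + exp (-iθ) φ (a + 1)) / 2`, so that
`φ (a_X(n))` and `φ (a_X(n) + 1)` are obtained from the digits of `X` by a recursion which consumes
the first digit and passes to the shift of `X`. Up to an error `O(|θ|³)` per digit, the Gaussians
`exp (-θ² q / 2)` satisfy the same recursion as soon as the variances `q` do: the variances stay,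
or become `1` plus the mean of the two. If `b` is the real number with binary digits `X`, the
recursion for the variances is solved exactly by `S_n + 2 b` and `S_n + 2 (1 - b)`, where `S_n` is
a Birkhoff sum of the function whose value at `X` has the binary digits `X₀ + X_i mod 2`, `i ≥ 1`.
The mean of this function is `V_ν`, so the pointwise ergodic theorem gives `S_n ∼ V_ν n` almost
surely. With `θ = t / √(V_ν n)` the total error is `O(n^(-1/2))`, the characteristic functions of
the rescaled measures converge to `exp (-t² / 2)`, and Lévy's continuity theorem concludes. Finally
`V_ν = 0` would force `X₀ = X₁` almost surely, and then `ν` would be one of the excluded Dirac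
masses by ergodicity.
-/

section PointwiseErgodic

open Topology

variable {α : Type*} {T : α → α} {g : α → ℝ}

/-- `maxBirkhoffSum T g n x` is the maximum over `k ≤ n` of the Birkhoff sums `S_k g x`, including
`S_0 g x = 0`. It is the function used in Garsia's proof of the maximal ergodic theorem. -/
noncomputable def maxBirkhoffSum (T : α → α) (g : α → ℝ) (n : ℕ) (x : α) : ℝ :=
  partialSups (fun k => birkhoffSum T g k x) n

lemma maxBirkhoffSum_mono (x : α) : Monotone fun n => maxBirkhoffSum T g n x :=
  partialSups_monotone _

lemma maxBirkhoffSum_nonneg (n : ℕ) (x : α) : 0 ≤ maxBirkhoffSum T g n x :=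
  le_partialSups_of_le (fun k => birkhoffSum T g k x) n.zero_le

lemma maxBirkhoffSum_zero (x : α) : maxBirkhoffSum T g 0 x = 0 :=
  partialSups_zero _

lemma maxBirkhoffSum_succ (n : ℕ) (x : α) :
    maxBirkhoffSum T g (n + 1) x = max (maxBirkhoffSum T g n x) (birkhoffSum T g (n + 1) x) :=
  partialSups_add_one _ n

lemma maxBirkhoffSum_succ' (n : ℕ) (x : α) :
    maxBirkhoffSum T g (n + 1) x = max 0 (g x + maxBirkhoffSum T g n (T x)) := by
  induction n with
  | zero => simp [maxBirkhoffSum_succ, maxBirkhoffSum_zero]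
  | succ n ih =>
    rw [maxBirkhoffSum_succ, ih, maxBirkhoffSum_succ, birkhoffSum_succ', max_assoc,
      max_add_add_left]

lemma maxBirkhoffSum_succ_sub_comp (n : ℕ) (x : α) :
    maxBirkhoffSum T g (n + 1) x - maxBirkhoffSum T g n (T x) =
      max (-maxBirkhoffSum T g n (T x)) (g x) := by
  rw [maxBirkhoffSum_succ', ← max_sub_sub_right, zero_sub, add_sub_cancel_right]

lemma bddAbove_range_maxBirkhoffSum_iff (x : α) :
    BddAbove (Set.range fun n => maxBirkhoffSum T g n x) ↔
      BddAbove (Set.range fun n => birkhoffSum T g n x) :=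
  bddAbove_range_partialSups

lemma bddAbove_range_birkhoffSum_apply_iff (x : α) :
    BddAbove (Set.range fun n => birkhoffSum T g n (T x)) ↔
      BddAbove (Set.range fun n => birkhoffSum T g n x) := by
  constructor
  · rintro ⟨C, hC⟩
    refine ⟨max 0 (g x + C), ?_⟩
    rintro _ ⟨_ | n, rfl⟩
    · simp
    · simpa [birkhoffSum_succ'] using Or.inr (hC ⟨n, rfl⟩)
  · rintro ⟨C, hC⟩
    refine ⟨C - g x, ?_⟩
    rintro _ ⟨n, rfl⟩
    have : birkhoffSum T g (n + 1) x ≤ C := hC ⟨n + 1, rfl⟩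
    rw [birkhoffSum_succ'] at this
    dsimp only
    linarith

variable [MeasurableSpace α] {ν : Measure α}

lemma integrable_birkhoffSum (hT : MeasurePreserving T ν ν) (hg : Integrable g ν) (n : ℕ) :
    Integrable (birkhoffSum T g n) ν :=
  integrable_finsetSum _ fun k _ => (hT.iterate k).integrable_comp_of_integrable hg

lemma integrable_maxBirkhoffSum (hT : MeasurePreserving T ν ν) (hg : Integrable g ν) (n : ℕ) :
    Integrable (maxBirkhoffSum T g n) ν := by
  induction n with
  | zero => exact (integrable_zero α ℝ ν).congr (ae_of_all _ fun x => (maxBirkhoffSum_zero x).symm)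
  | succ n ih =>
    exact (ih.sup (integrable_birkhoffSum hT hg (n + 1))).congr
      (ae_of_all _ fun x => (maxBirkhoffSum_succ n x).symm)

lemma integral_maxBirkhoffSum_sub_comp_nonneg (hT : MeasurePreserving T ν ν)
    (hg : Integrable g ν) (n : ℕ) :
    0 ≤ ∫ x, (maxBirkhoffSum T g (n + 1) x - maxBirkhoffSum T g n (T x)) ∂ν := by
  have hM := integrable_maxBirkhoffSum hT hg
  have hMT : Integrable (fun x => maxBirkhoffSum T g n (T x)) ν :=
    hT.integrable_comp_of_integrable (hM n)
  have hinv : ∫ x, maxBirkhoffSum T g n (T x) ∂ν = ∫ x, maxBirkhoffSum T g n x ∂ν := by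
    rw [← integral_map hT.aemeasurable, hT.map_eq]
    simpa only [hT.map_eq] using (hM n).aestronglyMeasurable
  rw [integral_sub (hM _) hMT, hinv, sub_nonneg]
  exact integral_mono (hM n) (hM _) fun x => maxBirkhoffSum_mono x n.le_succ

theorem integral_nonneg_of_ae_not_bddAbove_birkhoffSum (hT : MeasurePreserving T ν ν)
    (hg : Integrable g ν)
    (h : ∀ᵐ x ∂ν, ¬ BddAbove (Set.range fun n => birkhoffSum T g n x)) : 0 ≤ ∫ x, g x ∂ν := by
  refine ge_of_tendsto' (tendsto_integral_of_dominated_convergence (fun x => |g x|)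
    (fun n => ?_) hg.abs (fun n => ae_of_all _ fun x => ?_) ?_)
    (integral_maxBirkhoffSum_sub_comp_nonneg hT hg)
  · have hM := integrable_maxBirkhoffSum hT hg
    exact ((hM _).sub (hT.integrable_comp_of_integrable (hM n))).aestronglyMeasurable
  · have := maxBirkhoffSum_nonneg (T := T) (g := g) n (T x)
    rw [maxBirkhoffSum_succ_sub_comp, Real.norm_eq_abs]
    grind
  · filter_upwards [hT.quasiMeasurePreserving.ae h] with x hx
    have hM : Tendsto (fun n => maxBirkhoffSum T g n (T x)) atTop atTop :=
      tendsto_atTop_atTop_of_monotone' (maxBirkhoffSum_mono _)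
        (by rwa [bddAbove_range_maxBirkhoffSum_iff])
    refine tendsto_const_nhds.congr' ?_
    filter_upwards [hM.eventually_ge_atTop (-g x)] with n hn
    rw [maxBirkhoffSum_succ_sub_comp, max_eq_right (by linarith)]

lemma nullMeasurableSet_bddAbove_birkhoffSum (hT : MeasurePreserving T ν ν)
    (hg : Integrable g ν) :
    NullMeasurableSet {x | BddAbove (Set.range fun n => birkhoffSum T g n x)} ν := by
  have heq : {x | BddAbove (Set.range fun n => birkhoffSum T g n x)} =
      ⋃ K : ℕ, ⋂ n, {x | birkhoffSum T g n x ≤ K} := by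
    ext x
    simp only [Set.mem_ofPred_eq, Set.mem_iUnion, Set.mem_iInter]
    refine ⟨fun ⟨C, hC⟩ => ?_, fun ⟨K, hK⟩ => ⟨K, Set.forall_mem_range.2 hK⟩⟩
    obtain ⟨K, hK⟩ := exists_nat_ge C
    exact ⟨K, fun n => (hC ⟨n, rfl⟩).trans hK⟩
  rw [heq]
  exact .iUnion fun K => .iInter fun n => nullMeasurableSet_le
    (integrable_birkhoffSum hT hg n).aestronglyMeasurable.aemeasurable aemeasurable_const

theorem ae_bddAbove_birkhoffSum (hT : Ergodic T ν) (hg : Integrable g ν)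
    (hneg : ∫ x, g x ∂ν < 0) :
    ∀ᵐ x ∂ν, BddAbove (Set.range fun n => birkhoffSum T g n x) := by
  have hinv : T ⁻¹' {x | BddAbove (Set.range fun n => birkhoffSum T g n x)} =
      {x | BddAbove (Set.range fun n => birkhoffSum T g n x)} :=
    Set.ext bddAbove_range_birkhoffSum_apply_iff
  refine (hT.quasiErgodic.ae_mem_or_ae_notMem₀
    (nullMeasurableSet_bddAbove_birkhoffSum hT.toMeasurePreserving hg)
    (ae_of_all _ fun x => by exact congrArg (x ∈ ·) hinv)).resolve_right fun h => ?_
  exact hneg.not_ge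
    (integral_nonneg_of_ae_not_bddAbove_birkhoffSum hT.toMeasurePreserving hg h)

variable [IsProbabilityMeasure ν]

theorem ae_eventually_birkhoffAverage_lt (hT : Ergodic T ν) (hg : Integrable g ν) {c : ℝ}
    (hc : ∫ x, g x ∂ν < c) : ∀ᵐ x ∂ν, ∀ᶠ n in atTop, birkhoffAverage ℝ T g n x < c := by
  obtain ⟨b, hgb, hbc⟩ := exists_between hc
  have hneg : ∫ x, (g x - b) ∂ν < 0 := by
    rw [integral_sub hg (integrable_const b)]
    simpa using hgb
  filter_upwards [ae_bddAbove_birkhoffSum hT (hg.sub (integrable_const b)) hneg]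
    with x ⟨C, hC⟩
  have hlarge : ∀ᶠ n : ℕ in atTop, C < n * (c - b) :=
    (tendsto_natCast_atTop_atTop.atTop_mul_const (sub_pos.2 hbc)).eventually_gt_atTop C
  filter_upwards [hlarge, eventually_gt_atTop 0] with n hn hn0
  have hsum : birkhoffSum T g n x - n * b ≤ C := by
    simpa [birkhoffSum] using hC ⟨n, rfl⟩
  have hpos : (0 : ℝ) < n := Nat.cast_pos.2 hn0
  rw [birkhoffAverage, smul_eq_mul, inv_mul_lt_iff₀ hpos]
  linarith

theorem ae_tendsto_birkhoffAverage (hT : Ergodic T ν) (hg : Integrable g ν) :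
    ∀ᵐ x ∂ν, Tendsto (birkhoffAverage ℝ T g · x) atTop (𝓝 (∫ y, g y ∂ν)) := by
  have hlt (c : ℚ) : ∀ᵐ x ∂ν, ∫ y, g y ∂ν < c →
      ∀ᶠ n in atTop, birkhoffAverage ℝ T g n x < c := by
    by_cases hc : ∫ y, g y ∂ν < c
    · simpa [hc] using ae_eventually_birkhoffAverage_lt hT hg hc
    · simp [hc]
  have hgt (c : ℚ) : ∀ᵐ x ∂ν, c < ∫ y, g y ∂ν →
      ∀ᶠ n in atTop, c < birkhoffAverage ℝ T g n x := by
    by_cases hc : c < ∫ y, g y ∂ν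
    · have hneg : ∫ y, (-g) y ∂ν < -c := by simpa [integral_neg] using hc
      simpa [hc, birkhoffAverage_neg] using ae_eventually_birkhoffAverage_lt hT hg.neg hneg
    · simp [hc]
  filter_upwards [ae_all_iff.2 hlt, ae_all_iff.2 hgt] with x hxlt hxgt
  refine tendsto_order.2 ⟨fun a ha => ?_, fun b hb => ?_⟩
  · obtain ⟨c, hac, hc⟩ := exists_rat_btwn ha
    exact (hxgt c hc).mono fun n => hac.trans
  · obtain ⟨c, hc, hcb⟩ := exists_rat_btwn hb
    exact (hxlt c hc).mono fun n hn => hn.trans hcb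

end PointwiseErgodic

section CorrelationDensity

open Topology

lemma count_two_mul (p : ℕ → Prop) [DecidablePred p] (N : ℕ) :
    Nat.count p (2 * N) =
      Nat.count (fun n => p (2 * n)) N + Nat.count (fun n => p (2 * n + 1)) N := by
  induction N with
  | zero => simp
  | succ N ih =>
    simp only [mul_add_one, Nat.count_succ, ih]
    ring

lemma eq_add_div_two_of_tendsto_count_div {p : ℕ → Prop} [DecidablePred p] {x y z : ℝ}
    (hz : Tendsto (fun N : ℕ => (Nat.count p N : ℝ) / N) atTop (𝓝 z))
    (hx : Tendsto (fun N : ℕ => (Nat.count (fun n => p (2 * n)) N : ℝ) / N) atTop (𝓝 x))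
    (hy : Tendsto (fun N : ℕ => (Nat.count (fun n => p (2 * n + 1)) N : ℝ) / N) atTop (𝓝 y)) :
    z = (x + y) / 2 := by
  have htwo : Tendsto (fun N : ℕ => 2 * N) atTop atTop :=
    tendsto_id.const_mul_atTop' two_pos
  refine tendsto_nhds_unique (hz.comp htwo) (((hx.add hy).div_const 2).congr fun N => ?_)
  simp only [Function.comp_apply, count_two_mul, Nat.cast_add, Nat.cast_mul, Nat.cast_ofNat]
  rw [← add_div, div_div, mul_comm]

lemma s2_two_mul (n : ℕ) : s2 (2 * n) = s2 n := by
  rcases n.eq_zero_or_pos with rfl | hn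
  · rfl
  · simp [s2, Nat.digits_base_mul one_lt_two hn]

lemma s2_two_mul_add_one (n : ℕ) : s2 (2 * n + 1) = s2 n + 1 := by
  simp [s2, add_comm, Nat.add_mul_div_left]

/-- The variation `s₂(n + a) - s₂(n)` of the binary sum of digits under translation by `a`. -/
def digitSumDiff (a n : ℕ) : ℤ := (s2 (n + a) : ℤ) - s2 n

lemma digitSumDiff_zero (n : ℕ) : digitSumDiff 0 n = 0 := by
  simp [digitSumDiff]

lemma digitSumDiff_two_mul_two_mul (a n : ℕ) :
    digitSumDiff (2 * a) (2 * n) = digitSumDiff a n := by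
  simp only [digitSumDiff, ← mul_add, s2_two_mul]

lemma digitSumDiff_two_mul_two_mul_add_one (a n : ℕ) :
    digitSumDiff (2 * a) (2 * n + 1) = digitSumDiff a n := by
  rw [digitSumDiff, add_right_comm, ← mul_add]
  simp [s2_two_mul_add_one, digitSumDiff]

lemma digitSumDiff_two_mul_add_one_two_mul (a n : ℕ) :
    digitSumDiff (2 * a + 1) (2 * n) = digitSumDiff a n + 1 := by
  rw [digitSumDiff, ← add_assoc, ← mul_add, s2_two_mul, s2_two_mul_add_one, digitSumDiff]
  push_cast
  ring

lemma digitSumDiff_two_mul_add_one_two_mul_add_one (a n : ℕ) :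
    digitSumDiff (2 * a + 1) (2 * n + 1) = digitSumDiff (a + 1) n - 1 := by
  rw [digitSumDiff, show 2 * n + 1 + (2 * a + 1) = 2 * (n + (a + 1)) by ring, s2_two_mul,
    s2_two_mul_add_one, digitSumDiff]
  push_cast
  ring

namespace hasDensity

variable {a : ℕ} {d : ℤ} {x y z : ℝ}

lemma tendsto_count_div (h : hasDensity a d x) :
    Tendsto (fun N : ℕ => (Nat.count (fun n => digitSumDiff a n = d) N : ℝ) / N) atTop (𝓝 x) := by
  simp only [Nat.count_eq_card_filter_range]
  exact h

lemma nonneg (h : hasDensity a d x) : 0 ≤ x :=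
  ge_of_tendsto' h fun N => by positivity

lemma eq_ite (h : hasDensity 0 d x) : x = if d = 0 then 1 else 0 := by
  refine tendsto_nhds_unique h.tendsto_count_div (tendsto_const_nhds.congr' ?_)
  filter_upwards [eventually_ne_atTop 0] with N hN
  rcases eq_or_ne d 0 with rfl | hd
  · simp [digitSumDiff_zero, hN]
  · simp [digitSumDiff_zero, hd, hd.symm]

lemma eq_of_two_mul (hx : hasDensity a d x) (hz : hasDensity (2 * a) d z) : z = x := by
  have h := eq_add_div_two_of_tendsto_count_div (x := x) (y := x) hz.tendsto_count_div
    (by simpa only [digitSumDiff_two_mul_two_mul] using hx.tendsto_count_div)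
    (by simpa only [digitSumDiff_two_mul_two_mul_add_one] using hx.tendsto_count_div)
  linarith

lemma eq_add_div_two_of_two_mul_add_one (hx : hasDensity a (d - 1) x)
    (hy : hasDensity (a + 1) (d + 1) y) (hz : hasDensity (2 * a + 1) d z) : z = (x + y) / 2 := by
  refine eq_add_div_two_of_tendsto_count_div hz.tendsto_count_div ?_ ?_
  · simpa only [digitSumDiff_two_mul_add_one_two_mul, ← eq_sub_iff_add_eq]
      using hx.tendsto_count_div
  · simpa only [digitSumDiff_two_mul_add_one_two_mul_add_one, sub_eq_iff_eq_add]
      using hy.tendsto_count_div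

lemma sum_le_one {w : ℤ → ℝ} (h : ∀ d, hasDensity a d (w d)) (s : Finset ℤ) :
    ∑ d ∈ s, w d ≤ 1 := by
  refine le_of_tendsto' (tendsto_finsetSum s fun d _ => h d) fun N => ?_
  rw [← Finset.sum_div, ← Nat.cast_sum, Finset.sum_card_fiberwise_eq_card_filter]
  refine div_le_one_of_le₀ (Nat.cast_le.2 ?_) N.cast_nonneg
  exact (Finset.card_filter_le _ _).trans_eq (Finset.card_range N)

lemma summable {w : ℤ → ℝ} (h : ∀ d, hasDensity a d (w d)) : Summable w :=
  summable_of_sum_le (fun d => (h d).nonneg) (sum_le_one h)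

end hasDensity

end CorrelationDensity

section CarryRecursion

open Complex

/-- The characteristic function `θ ↦ ∑ d, exp (i θ d) w d` of a mass function `w` on `ℤ`. -/
noncomputable def charSeries (w : ℤ → ℝ) (θ : ℝ) : ℂ :=
  ∑' d : ℤ, exp (θ * d * I) * w d

lemma summable_charSeries {w : ℤ → ℝ} (hw : Summable w) (θ : ℝ) :
    Summable fun d : ℤ => exp (θ * d * I) * w d := by
  refine .of_norm_bounded hw.abs fun d => ?_
  have h := norm_exp_ofReal_mul_I (θ * d)
  push_cast at h
  rw [norm_mul, h, one_mul, norm_real, Real.norm_eq_abs]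

lemma charSeries_add_div {u v : ℤ → ℝ} (hu : Summable u) (hv : Summable v) (c θ : ℝ) :
    charSeries (fun d => (u d + v d) / c) θ = (charSeries u θ + charSeries v θ) / c := by
  rw [charSeries, charSeries, charSeries, ← (summable_charSeries hu θ).tsum_add
    (summable_charSeries hv θ), ← tsum_div_const]
  refine tsum_congr fun d => ?_
  push_cast
  ring

lemma exp_mul_charSeries {w : ℤ → ℝ} (k : ℤ) (θ : ℝ) :
    exp (θ * k * I) * charSeries w θ = charSeries (fun d => w (d - k)) θ := by
  rw [charSeries, charSeries, ← tsum_mul_left, ← (Equiv.subRight k).tsum_eq]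
  refine tsum_congr fun d => ?_
  rw [← mul_assoc, ← exp_add, Equiv.subRight_apply]
  push_cast
  ring_nf

/-- The recursion in the binary expansion of `a` satisfied, at a fixed frequency `θ`, by the
characteristic functions `φ a` of the correlation measures. -/
structure CarryRecursion (θ : ℝ) (φ : ℕ → ℂ) : Prop where
  zero : φ 0 = 1
  two_mul (a : ℕ) : φ (2 * a) = φ a
  two_mul_add_one (a : ℕ) :
    φ (2 * a + 1) = (exp (θ * I) * φ a + exp (-(θ * I)) * φ (a + 1)) / 2

theorem carryRecursion_charSeries {μ : ℕ → ℤ → ℝ} (hμ : ∀ a d, hasDensity a d (μ a d)) (θ : ℝ) :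
    CarryRecursion θ fun a => charSeries (μ a) θ where
  zero := by
    have h : μ 0 = fun d => if d = 0 then 1 else 0 := funext fun d => (hμ 0 d).eq_ite
    rw [charSeries, h, tsum_eq_single 0 fun d hd => by simp [hd]]
    simp
  two_mul a := by
    have h : μ (2 * a) = μ a := funext fun d => (hμ a d).eq_of_two_mul (hμ (2 * a) d)
    rw [h]
  two_mul_add_one a := by
    have h : μ (2 * a + 1) = fun d => (μ a (d - 1) + μ (a + 1) (d - (-1))) / 2 :=
      funext fun d => (hμ a _).eq_add_div_two_of_two_mul_add_one (hμ (a + 1) _) (hμ _ d)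
    have hs (k : ℤ) (b : ℕ) : Summable fun d => μ b (d - k) :=
      (Equiv.subRight k).summable_iff.2 (hasDensity.summable (hμ b))
    rw [h, charSeries_add_div (hs 1 a) (hs (-1) (a + 1)), ← exp_mul_charSeries,
      ← exp_mul_charSeries]
    simp

variable {θ : ℝ} {φ : ℕ → ℂ}

lemma CarryRecursion.norm_apply_one_sub_one_le (hφ : CarryRecursion θ φ) :
    ‖φ 1 - 1‖ ≤ θ ^ 2 := by
  have hone : φ 1 - 1 = exp (-(θ * I)) * (φ 1 - 1) / 2 + (Real.cos θ - 1 : ℝ) := by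
    have h := hφ.two_mul_add_one 0
    simp only [mul_zero, zero_add, hφ.zero, mul_one] at h
    push_cast
    rw [Complex.cos, neg_mul]
    linear_combination h
  have hcos : |Real.cos θ - 1| ≤ θ ^ 2 / 2 := by
    rw [abs_sub_comm, abs_of_nonneg (sub_nonneg.2 (Real.cos_le_one θ))]
    linarith [Real.one_sub_sq_div_two_le_cos (x := θ)]
  have hexp : ‖exp (-(θ * I))‖ = 1 := by simp [norm_exp]
  have hle : ‖φ 1 - 1‖ ≤ ‖φ 1 - 1‖ / 2 + θ ^ 2 / 2 := calc
    ‖φ 1 - 1‖ ≤ ‖exp (-(θ * I)) * (φ 1 - 1) / 2‖ + ‖((Real.cos θ - 1 : ℝ) : ℂ)‖ := by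
      conv_lhs => rw [hone]
      exact norm_add_le _ _
    _ ≤ ‖φ 1 - 1‖ / 2 + θ ^ 2 / 2 := by
      rw [norm_div, norm_mul, hexp, one_mul, norm_real, Real.norm_eq_abs]
      simpa using hcos
  linarith

lemma CarryRecursion.eq_one (hφ : CarryRecursion 0 φ) (a : ℕ) : φ a = 1 := by
  induction a using Nat.strong_induction_on with
  | h a ih =>
    rcases a.even_or_odd' with ⟨k, rfl | rfl⟩
    · rcases k.eq_zero_or_pos with rfl | hk
      · exact hφ.zero
      · rw [hφ.two_mul, ih k (by lia)]
    · rcases k.eq_zero_or_pos with rfl | hk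
      · simpa [sub_eq_zero] using hφ.norm_apply_one_sub_one_le
      · rw [hφ.two_mul_add_one, ih k (by lia), ih (k + 1) (by lia)]
        simp

theorem hasDensity.hasSum_one {μ : ℕ → ℤ → ℝ} (hμ : ∀ a d, hasDensity a d (μ a d)) (a : ℕ) :
    HasSum (μ a) 1 := by
  have h := (carryRecursion_charSeries hμ 0).eq_one a
  simp only [charSeries, ofReal_zero, zero_mul, exp_zero, one_mul] at h
  rw [← ofReal_tsum, ofReal_eq_one] at h
  exact h ▸ (hasDensity.summable (hμ a)).hasSum

end CarryRecursion

section GaussianStep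

open Complex

lemma abs_cosh_sub_one_le_sq {s : ℝ} (hs : |s| ≤ 1) : |Real.cosh s - 1| ≤ s ^ 2 := by
  have hsq : |s ^ 2 / 2| ≤ 1 := by
    rw [abs_of_nonneg (by positivity)]
    linarith [(sq_le_one_iff_abs_le_one s).2 hs]
  have hexp := Real.abs_exp_sub_one_le hsq
  rw [abs_of_nonneg (by positivity : 0 ≤ s ^ 2 / 2)] at hexp
  rw [abs_of_nonneg (sub_nonneg.2 (Real.one_le_cosh s))]
  linarith [Real.cosh_le_exp_half_sq s, le_of_abs_le hexp]

lemma abs_sinh_le_two_mul_abs {s : ℝ} (hs : |s| ≤ 1) : |Real.sinh s| ≤ 2 * |s| := by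
  have hneg : |Real.exp (-s) - 1| ≤ 2 * |s| := by
    simpa using Real.abs_exp_sub_one_le (x := -s) (by rwa [abs_neg])
  rw [Real.sinh_eq, abs_le]
  constructor <;> linarith [abs_le.1 hneg, abs_le.1 (Real.abs_exp_sub_one_le hs)]

lemma abs_cosh_mul_cos_sub_exp_le {s θ : ℝ} (hθ : |θ| ≤ 1) (hs : |s| ≤ θ ^ 2 / 2) :
    |Real.cosh s * Real.cos θ - Real.exp (-(θ ^ 2 / 2))| ≤ |θ| ^ 3 := by
  have hθsq : θ ^ 2 ≤ 1 := (sq_le_one_iff_abs_le_one θ).2 hθ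
  have hcosh : |(Real.cosh s - 1) * Real.cos θ| ≤ s ^ 2 := by
    rw [abs_mul]
    exact (mul_le_of_le_one_right (abs_nonneg _) (Real.abs_cos_le_one θ)).trans
      (abs_cosh_sub_one_le_sq (by linarith))
  have hexp : |Real.exp (-(θ ^ 2 / 2)) - 1 - -(θ ^ 2 / 2)| ≤ (-(θ ^ 2 / 2)) ^ 2 :=
    Real.abs_exp_sub_one_sub_id_le (by rw [abs_neg, abs_of_nonneg] <;> nlinarith)
  have hcos := Real.cos_bound hθ
  have hssq : s ^ 2 ≤ (θ ^ 2 / 2) ^ 2 := sq_le_sq' (neg_le_of_abs_le hs) (le_of_abs_le hs)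
  have hpow : |θ| ^ 4 ≤ |θ| ^ 3 := pow_le_pow_of_le_one (abs_nonneg θ) hθ (by norm_num)
  have hpow' : |θ| ^ 4 = θ ^ 4 := by rw [← abs_pow, abs_of_nonneg (by positivity)]
  rw [hpow'] at hcos hpow
  rw [abs_le] at *
  constructor <;> nlinarith

lemma norm_cosh_sub_exp_le {s θ : ℝ} (hθ : |θ| ≤ 1) (hs : |s| ≤ θ ^ 2 / 2) :
    ‖cosh (s + θ * I) - Real.exp (-(θ ^ 2 / 2))‖ ≤ 2 * |θ| ^ 3 := by
  have hdecomp : cosh (s + θ * I) - Real.exp (-(θ ^ 2 / 2)) =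
      (Real.cosh s * Real.cos θ - Real.exp (-(θ ^ 2 / 2)) : ℝ) +
        (Real.sinh s * Real.sin θ : ℝ) * I := by
    rw [cosh_add, cosh_mul_I, sinh_mul_I]
    push_cast
    ring
  have hsinh : |Real.sinh s * Real.sin θ| ≤ |θ| ^ 3 := calc
    |Real.sinh s * Real.sin θ| ≤ (2 * |s|) * |θ| := by
      rw [abs_mul]
      refine mul_le_mul (abs_sinh_le_two_mul_abs ?_) Real.abs_sin_le_abs (abs_nonneg _)
        (by positivity)
      linarith [(sq_le_one_iff_abs_le_one θ).2 hθ]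
    _ ≤ θ ^ 2 * |θ| := by gcongr; linarith
    _ = |θ| ^ 3 := by rw [← sq_abs]; ring
  rw [hdecomp]
  refine (norm_add_le _ _).trans ?_
  rw [norm_mul, norm_I, mul_one, norm_real, norm_real, Real.norm_eq_abs, Real.norm_eq_abs]
  linarith [abs_cosh_mul_cos_sub_exp_le hθ hs]

/-- The characteristic function at `θ` of the centred Gaussian distribution of variance `q`. -/
noncomputable def gaussChar (θ q : ℝ) : ℝ :=
  Real.exp (-(θ ^ 2 * q / 2))

lemma abs_gaussChar_le_one (θ : ℝ) {q : ℝ} (hq : 0 ≤ q) : |gaussChar θ q| ≤ 1 := by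
  rw [gaussChar, Real.abs_exp, Real.exp_le_one_iff]
  have : 0 ≤ θ ^ 2 * q / 2 := by positivity
  linarith

lemma abs_one_sub_gaussChar_le (θ : ℝ) {q : ℝ} (hq : 0 ≤ q) :
    |1 - gaussChar θ q| ≤ θ ^ 2 * q / 2 := by
  rw [abs_of_nonneg (sub_nonneg.2 (le_of_abs_le (abs_gaussChar_le_one θ hq))), gaussChar]
  linarith [Real.add_one_le_exp (-(θ ^ 2 * q / 2))]

lemma exp_mul_gaussChar_add_div_two (θ q₀ q₁ : ℝ) :
    (exp (θ * I) * gaussChar θ q₀ + exp (-(θ * I)) * gaussChar θ q₁) / 2 =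
      gaussChar θ ((q₀ + q₁) / 2) * cosh ((θ ^ 2 * (q₁ - q₀) / 4 : ℝ) + θ * I) := by
  simp only [gaussChar, ofReal_exp, Complex.cosh]
  rw [mul_div_assoc', mul_add, ← exp_add, ← exp_add, ← exp_add, ← exp_add]
  push_cast
  ring_nf

lemma norm_exp_mul_gaussChar_sub_le {θ q₀ q₁ : ℝ} (hθ : |θ| ≤ 1) (h₀ : 0 ≤ q₀) (h₁ : 0 ≤ q₁)
    (hq : |q₁ - q₀| ≤ 2) :
    ‖(exp (θ * I) * gaussChar θ q₀ + exp (-(θ * I)) * gaussChar θ q₁) / 2 -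
      gaussChar θ (1 + (q₀ + q₁) / 2)‖ ≤ 2 * |θ| ^ 3 := by
  have hs : |θ ^ 2 * (q₁ - q₀) / 4| ≤ θ ^ 2 / 2 := by
    rw [abs_div, abs_mul, abs_sq, abs_of_pos (four_pos : (0 : ℝ) < 4)]
    nlinarith [sq_nonneg θ]
  have hone : gaussChar θ (1 + (q₀ + q₁) / 2) =
      gaussChar θ ((q₀ + q₁) / 2) * Real.exp (-(θ ^ 2 / 2)) := by
    rw [gaussChar, gaussChar, ← Real.exp_add]
    ring_nf
  rw [exp_mul_gaussChar_add_div_two, hone, ofReal_mul, ← mul_sub, norm_mul, norm_real]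
  refine (mul_le_of_le_one_left (norm_nonneg _) ?_).trans (norm_cosh_sub_exp_le hθ hs)
  exact abs_gaussChar_le_one θ (by positivity)

lemma norm_exp_mul_add_div_two_sub_gaussChar_le {θ q₀ q₁ ε : ℝ} {z₀ z₁ : ℂ} (hθ : |θ| ≤ 1)
    (h₀ : 0 ≤ q₀) (h₁ : 0 ≤ q₁) (hq : |q₁ - q₀| ≤ 2) (hz₀ : ‖z₀ - gaussChar θ q₀‖ ≤ ε)
    (hz₁ : ‖z₁ - gaussChar θ q₁‖ ≤ ε) :
    ‖(exp (θ * I) * z₀ + exp (-(θ * I)) * z₁) / 2 - gaussChar θ (1 + (q₀ + q₁) / 2)‖ ≤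
      ε + 2 * |θ| ^ 3 := by
  have hunit : ‖exp (θ * I)‖ = 1 ∧ ‖exp (-(θ * I))‖ = 1 := by simp [norm_exp]
  have herr : ‖(exp (θ * I) * (z₀ - gaussChar θ q₀) +
      exp (-(θ * I)) * (z₁ - gaussChar θ q₁)) / 2‖ ≤ ε := by
    have h := norm_add_le (exp (θ * I) * (z₀ - gaussChar θ q₀))
      (exp (-(θ * I)) * (z₁ - gaussChar θ q₁))
    rw [norm_mul, norm_mul, hunit.1, hunit.2, one_mul, one_mul] at h
    rw [norm_div, Complex.norm_ofNat]
    linarith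
  have hsplit : (exp (θ * I) * z₀ + exp (-(θ * I)) * z₁) / 2 - gaussChar θ (1 + (q₀ + q₁) / 2) =
      (exp (θ * I) * (z₀ - gaussChar θ q₀) + exp (-(θ * I)) * (z₁ - gaussChar θ q₁)) / 2 +
        ((exp (θ * I) * gaussChar θ q₀ + exp (-(θ * I)) * gaussChar θ q₁) / 2 -
          gaussChar θ (1 + (q₀ + q₁) / 2)) := by
    ring
  rw [hsplit]
  exact norm_add_le_of_le herr (norm_exp_mul_gaussChar_sub_le hθ h₀ h₁ hq)

end GaussianStep

section Disagreement

/-- The real number in `[0, 1]` with binary digits `0.X₀X₁X₂…`. -/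
noncomputable def binaryFraction (X : ℕ → Bool) : ℝ :=
  Real.ofDigits fun i => finTwoEquiv.symm (X i)

lemma continuous_binaryFraction : Continuous binaryFraction :=
  Real.continuous_ofDigits.comp <|
    continuous_pi fun i => continuous_of_discreteTopology.comp (continuous_apply i)

lemma hasSum_binaryFraction (X : ℕ → Bool) :
    HasSum (fun i => (X i).toNat / (2 : ℝ) ^ (i + 1)) (binaryFraction X) := by
  refine Real.summable_ofDigitsTerm.hasSum.congr_fun fun i => ?_
  cases h : X i <;> simp [Real.ofDigitsTerm, finTwoEquiv, h]

lemma binaryFraction_nonneg (X : ℕ → Bool) : 0 ≤ binaryFraction X :=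
  Real.ofDigits_nonneg _

lemma binaryFraction_le_one (X : ℕ → Bool) : binaryFraction X ≤ 1 :=
  Real.ofDigits_le_one _

lemma hasSum_one_div_two_pow_succ : HasSum (fun i : ℕ => 1 / (2 : ℝ) ^ (i + 1)) 1 := by
  simpa [pow_succ', div_eq_mul_inv, mul_comm] using hasSum_geometric_two' 1

lemma binaryFraction_not (X : ℕ → Bool) :
    binaryFraction (fun i => !X i) = 1 - binaryFraction X := by
  refine (hasSum_binaryFraction _).unique
    ((hasSum_one_div_two_pow_succ.sub (hasSum_binaryFraction X)).congr_fun fun i => ?_)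
  cases X i <;> simp

lemma two_mul_binaryFraction (X : ℕ → Bool) :
    2 * binaryFraction X = (X 0).toNat + binaryFraction (shift X) := by
  have h := Real.ofDigits_eq_sum_add_ofDigits (fun i => finTwoEquiv.symm (X i)) 1
  have hterm : Real.ofDigitsTerm (fun i => finTwoEquiv.symm (X i)) 0 = (X 0).toNat / 2 := by
    cases hX : X 0 <;> simp [Real.ofDigitsTerm, finTwoEquiv, hX]
  rw [Finset.sum_range_one, hterm, add_comm] at h
  simp only [binaryFraction, shift, h]
  push_cast
  ring

/-- The number with binary digits `X₀ + X_i mod 2`, `i ≥ 1`. Its mean is the constant `V_ν`. -/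
noncomputable def disagreement (X : ℕ → Bool) : ℝ :=
  binaryFraction fun i => X 0 ^^ X (i + 1)

lemma disagreement_of_false {X : ℕ → Bool} (h : X 0 = false) :
    disagreement X = binaryFraction (shift X) := by
  simp only [disagreement, h, Bool.false_xor]
  rfl

lemma disagreement_of_true {X : ℕ → Bool} (h : X 0 = true) :
    disagreement X = 1 - binaryFraction (shift X) := by
  simp only [disagreement, h, Bool.true_xor, ← binaryFraction_not, shift]

lemma disagreement_nonneg (X : ℕ → Bool) : 0 ≤ disagreement X :=
  binaryFraction_nonneg _

lemma continuous_disagreement : Continuous disagreement := by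
  have hxor : Continuous fun p : Bool × Bool => p.1 ^^ p.2 := continuous_of_discreteTopology
  have hzero : Continuous fun X : ℕ → Bool => X 0 := continuous_apply 0
  exact continuous_binaryFraction.comp <| continuous_pi fun i =>
    hxor.comp₂ hzero (continuous_apply (i + 1))

lemma integrable_disagreement (ν : Measure (ℕ → Bool)) [IsFiniteMeasure ν] :
    Integrable disagreement ν :=
  continuous_disagreement.integrable_of_hasCompactSupport (HasCompactSupport.of_compactSpace _)

lemma measurableSet_zero_ne (i : ℕ) : MeasurableSet {X : ℕ → Bool | X 0 ≠ X i} :=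
  (measurableSet_eq_fun (measurable_pi_apply 0) (measurable_pi_apply i)).compl

lemma hasSum_disagreement (X : ℕ → Bool) :
    HasSum (fun i => {Y : ℕ → Bool | Y 0 ≠ Y (i + 1)}.indicator (fun _ => 1 / (2 : ℝ) ^ (i + 1)) X)
      (disagreement X) := by
  refine (hasSum_binaryFraction _).congr_fun fun i => ?_
  cases h : X 0 <;> cases h' : X (i + 1) <;> simp [h, h', Set.indicator]

theorem hasSum_integral_disagreement (ν : Measure (ℕ → Bool)) [IsFiniteMeasure ν] :
    HasSum (fun i : ℕ => ν.real {X | X 0 ≠ X (i + 1)} / 2 ^ (i + 1)) (∫ X, disagreement X ∂ν) := by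
  have h := hasSum_integral_of_dominated_convergence (μ := ν)
    (F := fun i => {X : ℕ → Bool | X 0 ≠ X (i + 1)}.indicator fun _ => 1 / (2 : ℝ) ^ (i + 1))
    (fun i _ => 1 / (2 : ℝ) ^ (i + 1))
    (fun i => (measurable_const.indicator (measurableSet_zero_ne _)).aestronglyMeasurable)
    (fun i => ae_of_all _ fun X => (norm_indicator_le_norm_self _ _).trans_eq (by simp))
    (ae_of_all _ fun _ => hasSum_one_div_two_pow_succ.summable) (integrable_const _)
    (ae_of_all _ hasSum_disagreement)
  simpa [integral_indicator_const _ (measurableSet_zero_ne _), div_eq_mul_inv] using h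

end Disagreement

section PrefixEstimate
open Complex Topology

lemma aX_zero (X : ℕ → Bool) : aX X 0 = (X 0).toNat := by
  cases h : X 0 <;> simp [aX, h]

lemma aX_succ (X : ℕ → Bool) (n : ℕ) : aX X (n + 1) = 2 * aX (shift X) n + (X 0).toNat := by
  have hzero : (if X 0 then 2 ^ 0 else 0) = (X 0).toNat := by cases X 0 <;> rfl
  rw [aX, Finset.sum_range_succ', hzero, aX, Finset.mul_sum]
  congr 1
  refine Finset.sum_congr rfl fun k _ => ?_
  cases hk : X (k + 1) <;> simp [shift, hk, pow_succ']

/-- A proxy, up to a bounded error, for the variance of `μ_a` at `a = a_X(n)`. It is chosen so as to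
satisfy the variance recursion along the binary expansion of `a` exactly. -/
noncomputable def prefixVariance (n : ℕ) (X : ℕ → Bool) : ℝ :=
  birkhoffSum shift disagreement n X + 2 * binaryFraction X

/-- The analogue of `prefixVariance` at `a = a_X(n) + 1`. -/
noncomputable def succPrefixVariance (n : ℕ) (X : ℕ → Bool) : ℝ :=
  birkhoffSum shift disagreement n X + 2 * (1 - binaryFraction X)

lemma birkhoffSum_disagreement_nonneg (n : ℕ) (X : ℕ → Bool) :
    0 ≤ birkhoffSum shift disagreement n X :=
  Finset.sum_nonneg fun _ _ => disagreement_nonneg _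

lemma prefixVariance_nonneg (n : ℕ) (X : ℕ → Bool) : 0 ≤ prefixVariance n X := by
  rw [prefixVariance]
  linarith [birkhoffSum_disagreement_nonneg n X, binaryFraction_nonneg X]

lemma succPrefixVariance_nonneg (n : ℕ) (X : ℕ → Bool) : 0 ≤ succPrefixVariance n X := by
  rw [succPrefixVariance]
  linarith [birkhoffSum_disagreement_nonneg n X, binaryFraction_le_one X]

lemma abs_succPrefixVariance_sub_le (n : ℕ) (X : ℕ → Bool) :
    |succPrefixVariance n X - prefixVariance n X| ≤ 2 := by
  rw [succPrefixVariance, prefixVariance, abs_le]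
  constructor <;> linarith [binaryFraction_nonneg X, binaryFraction_le_one X]

lemma prefixVariance_succ_of_false (n : ℕ) {X : ℕ → Bool} (h : X 0 = false) :
    prefixVariance (n + 1) X = prefixVariance n (shift X) ∧
      succPrefixVariance (n + 1) X =
        1 + (prefixVariance n (shift X) + succPrefixVariance n (shift X)) / 2 := by
  have hb := two_mul_binaryFraction X
  rw [h, Bool.toNat_false, Nat.cast_zero] at hb
  simp only [prefixVariance, succPrefixVariance, birkhoffSum_succ', disagreement_of_false h]
  constructor <;> linarith

lemma prefixVariance_succ_of_true (n : ℕ) {X : ℕ → Bool} (h : X 0 = true) :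
    prefixVariance (n + 1) X =
        1 + (prefixVariance n (shift X) + succPrefixVariance n (shift X)) / 2 ∧
      succPrefixVariance (n + 1) X = succPrefixVariance n (shift X) := by
  have hb := two_mul_binaryFraction X
  rw [h, Bool.toNat_true, Nat.cast_one] at hb
  simp only [prefixVariance, succPrefixVariance, birkhoffSum_succ', disagreement_of_true h]
  constructor <;> linarith

variable {θ : ℝ} {φ : ℕ → ℂ}

lemma CarryRecursion.norm_sub_gaussChar_le_of_le_two (hφ : CarryRecursion θ φ) {a : ℕ} (ha : a ≤ 2)
    {q : ℝ} (h₀ : 0 ≤ q) (h₂ : q ≤ 2) : ‖φ a - gaussChar θ q‖ ≤ 2 * θ ^ 2 := by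
  have hφa : ‖φ a - 1‖ ≤ θ ^ 2 := by
    interval_cases a
    · simpa [hφ.zero] using sq_nonneg θ
    · exact hφ.norm_apply_one_sub_one_le
    · rw [hφ.two_mul 1]
      exact hφ.norm_apply_one_sub_one_le
  have hg : ‖(1 - gaussChar θ q : ℂ)‖ ≤ θ ^ 2 * q / 2 := by
    exact_mod_cast abs_one_sub_gaussChar_le θ h₀
  have := norm_sub_le_norm_sub_add_norm_sub (φ a) 1 (gaussChar θ q : ℂ)
  nlinarith [sq_nonneg θ]

theorem CarryRecursion.norm_apply_aX_sub_gaussChar_le (hφ : CarryRecursion θ φ) (hθ : |θ| ≤ 1)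
    (n : ℕ) (X : ℕ → Bool) :
    ‖φ (aX X n) - gaussChar θ (prefixVariance n X)‖ ≤ n * (2 * |θ| ^ 3) + 2 * θ ^ 2 ∧
      ‖φ (aX X n + 1) - gaussChar θ (succPrefixVariance n X)‖ ≤
        n * (2 * |θ| ^ 3) + 2 * θ ^ 2 := by
  induction n generalizing X with
  | zero =>
    have h₀ := binaryFraction_nonneg X
    have h₁ := binaryFraction_le_one X
    have ha := (X 0).toNat_le
    simp only [aX_zero, prefixVariance, succPrefixVariance, birkhoffSum_zero, zero_add,
      Nat.cast_zero, zero_mul]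
    exact ⟨hφ.norm_sub_gaussChar_le_of_le_two (by lia) (by linarith) (by linarith),
      hφ.norm_sub_gaussChar_le_of_le_two (by lia) (by linarith) (by linarith)⟩
  | succ n ih =>
    obtain ⟨ih₀, ih₁⟩ := ih (shift X)
    have hodd := norm_exp_mul_add_div_two_sub_gaussChar_le hθ (prefixVariance_nonneg n (shift X))
      (succPrefixVariance_nonneg n (shift X)) (abs_succPrefixVariance_sub_le n (shift X)) ih₀ ih₁
    rw [← hφ.two_mul_add_one] at hodd
    have herr : n * (2 * |θ| ^ 3) + 2 * θ ^ 2 + 2 * |θ| ^ 3 =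
        (n + 1 : ℕ) * (2 * |θ| ^ 3) + 2 * θ ^ 2 := by
      push_cast
      ring
    have hmono : n * (2 * |θ| ^ 3) + 2 * θ ^ 2 ≤ (n + 1 : ℕ) * (2 * |θ| ^ 3) + 2 * θ ^ 2 := by
      gcongr
      exact n.le_succ
    rw [herr] at hodd
    cases hX : X 0 with
    | false =>
      rw [(prefixVariance_succ_of_false n hX).1, (prefixVariance_succ_of_false n hX).2, aX_succ, hX,
        Bool.toNat_false, add_zero, hφ.two_mul]
      exact ⟨ih₀.trans hmono, hodd⟩
    | true =>
      rw [(prefixVariance_succ_of_true n hX).1, (prefixVariance_succ_of_true n hX).2, aX_succ, hX,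
        Bool.toNat_true, add_assoc, ← mul_add_one, hφ.two_mul]
      exact ⟨hodd, ih₁.trans hmono⟩

lemma tendsto_zero_of_tendsto_natCast_mul_sq {θ : ℕ → ℝ} {τ : ℝ}
    (h : Tendsto (fun n : ℕ => n * θ n ^ 2) atTop (𝓝 τ)) : Tendsto θ atTop (𝓝 0) := by
  have hsq : Tendsto (fun n => θ n ^ 2) atTop (𝓝 0) := by
    rw [← mul_zero τ]
    refine (h.mul tendsto_inv_atTop_nhds_zero_nat).congr' ?_
    filter_upwards [eventually_ne_atTop 0] with n hn
    field_simp
  exact squeeze_zero_norm (fun n => (Real.sqrt_sq_eq_abs (θ n)).ge)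
    (by simpa using hsq.sqrt)

lemma tendsto_gaussChar_prefixVariance {θ : ℕ → ℝ} {X : ℕ → Bool} {τ v : ℝ}
    (hθ : Tendsto (fun n : ℕ => n * θ n ^ 2) atTop (𝓝 τ))
    (hX : Tendsto (birkhoffAverage ℝ shift disagreement · X) atTop (𝓝 v)) :
    Tendsto (fun n => gaussChar (θ n) (prefixVariance n X)) atTop
      (𝓝 (Real.exp (-(τ * v / 2)))) := by
  have hlim := (hθ.mul hX).add
    (((tendsto_zero_of_tendsto_natCast_mul_sq hθ).pow 2).mul_const (2 * binaryFraction X))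
  rw [zero_pow two_ne_zero, zero_mul, add_zero] at hlim
  refine (Real.continuous_exp.tendsto _).comp ((hlim.div_const 2).neg.congr' ?_)
  filter_upwards [eventually_ne_atTop 0] with n hn
  simp only [prefixVariance, birkhoffAverage, smul_eq_mul]
  field_simp

theorem tendsto_apply_aX_of_tendsto_birkhoffAverage {θ : ℕ → ℝ} {φ : ℕ → ℕ → ℂ}
    (hφ : ∀ n, CarryRecursion (θ n) (φ n)) {X : ℕ → Bool} {τ v : ℝ}
    (hθ : Tendsto (fun n : ℕ => n * θ n ^ 2) atTop (𝓝 τ))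
    (hX : Tendsto (birkhoffAverage ℝ shift disagreement · X) atTop (𝓝 v)) :
    Tendsto (fun n => φ n (aX X n)) atTop (𝓝 (Real.exp (-(τ * v / 2)) : ℝ)) := by
  have hzero := tendsto_zero_of_tendsto_natCast_mul_sq hθ
  have herr : Tendsto (fun n : ℕ => n * (2 * |θ n| ^ 3) + 2 * θ n ^ 2) atTop (𝓝 0) := by
    have h := ((hθ.const_mul 2).mul hzero.abs).add ((hzero.pow 2).const_mul 2)
    simp only [abs_zero, mul_zero, zero_pow two_ne_zero, add_zero] at h
    refine h.congr fun n => ?_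
    rw [← sq_abs]
    ring
  have hdiff : Tendsto (fun n => φ n (aX X n) - gaussChar (θ n) (prefixVariance n X)) atTop
      (𝓝 0) := by
    refine squeeze_zero_norm' ?_ herr
    filter_upwards [hzero.abs.eventually_le_const (by simp : |(0 : ℝ)| < 1)] with n hn
    exact ((hφ n).norm_apply_aX_sub_gaussChar_le hn n X).1
  simpa using hdiff.add ((continuous_ofReal.tendsto _).comp
    (tendsto_gaussChar_prefixVariance hθ hX))

end PrefixEstimate

section Positivity

lemma iterate_shift_apply_zero (n : ℕ) (X : ℕ → Bool) : (shift^[n] X) 0 = X n := by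
  induction n generalizing X with
  | zero => rfl
  | succ _ ih => exact ih (shift X)

lemma ae_eq_const_of_ae_zero_eq_one {ν : Measure (ℕ → Bool)} (hν : Ergodic shift ν)
    (h : ∀ᵐ X ∂ν, X 0 = X 1) : ∃ b : Bool, ∀ᵐ X ∂ν, X = fun _ => b := by
  obtain ⟨b, hb⟩ := hν.ae_eq_const_of_ae_eq_comp_ae (g := fun X => X 0)
    (measurable_pi_apply 0).aestronglyMeasurable (h.mono fun _ => Eq.symm)
  refine ⟨b, ?_⟩
  have hall : ∀ᵐ X ∂ν, ∀ n, (shift^[n] X) 0 = b :=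
    ae_all_iff.2 fun n => (hν.toMeasurePreserving.iterate n).quasiMeasurePreserving.ae hb
  filter_upwards [hall] with X hX
  exact funext fun n => (iterate_shift_apply_zero n X).symm.trans (hX n)

lemma eq_dirac_of_ae_eq_const {α : Type*} [MeasurableSpace α] {ν : Measure α}
    [IsProbabilityMeasure ν] {a : α} (h : ∀ᵐ x ∂ν, x = a) : ν = Measure.dirac a := by
  have hmap : ν.map id = ν.map fun _ => a := Measure.map_congr h
  simpa using hmap

theorem integral_disagreement_pos {ν : Measure (ℕ → Bool)} [IsProbabilityMeasure ν]
    (hν : Ergodic shift ν) (hdirac : ∀ b : Bool, ν ≠ Measure.dirac fun _ => b) :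
    0 < ∫ X, disagreement X ∂ν := by
  have hne : 0 < ν.real {X | X 0 ≠ X 1} := by
    refine measureReal_nonneg.lt_of_ne' fun h => ?_
    have hae : ∀ᵐ X ∂ν, X 0 = X 1 := (measureReal_eq_zero_iff).1 h
    obtain ⟨b, hb⟩ := ae_eq_const_of_ae_zero_eq_one hν hae
    exact hdirac b (eq_dirac_of_ae_eq_const hb)
  exact (div_pos hne (by norm_num)).trans_le
    (le_hasSum (hasSum_integral_disagreement ν) 0 fun i _ => by positivity)

end Positivity

section DiscreteMeasure

open Topology BoundedContinuousFunction InnerProductSpace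

variable {ι E : Type*} [MeasurableSpace E]

/-- The measure `∑ i, w i • δ_{x i}`. Negative weights count as `0`. -/
noncomputable def discreteMeasure (w : ι → ℝ) (x : ι → E) : Measure E :=
  Measure.sum fun i => ENNReal.ofReal (w i) • Measure.dirac (x i)

lemma isProbabilityMeasure_discreteMeasure {w : ι → ℝ} (hw₀ : ∀ i, 0 ≤ w i) (hw : HasSum w 1)
    (x : ι → E) : IsProbabilityMeasure (discreteMeasure w x) where
  measure_univ := by
    simp [discreteMeasure, ← ENNReal.ofReal_tsum_of_nonneg hw₀ hw.summable, hw.tsum_eq]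

lemma integral_discreteMeasure [Countable ι] [MeasurableSingletonClass E] {G : Type*}
    [NormedAddCommGroup G] [NormedSpace ℝ G] [CompleteSpace G] {w : ι → ℝ}
    (hw₀ : ∀ i, 0 ≤ w i) (hw : Summable w) (x : ι → E) {f : E → G} {C : ℝ}
    (hf : ∀ y, ‖f y‖ ≤ C) :
    ∫ y, f y ∂discreteMeasure w x = ∑' i, w i • f (x i) := by
  have hsum : Summable fun i => (ENNReal.ofReal (w i)).toReal * ‖f (x i)‖ := by
    refine .of_nonneg_of_le (fun i => by positivity) (fun i => ?_) (hw.mul_right C)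
    rw [ENNReal.toReal_ofReal (hw₀ i)]
    exact mul_le_mul_of_nonneg_left (hf _) (hw₀ i)
  rw [discreteMeasure, integral_sum_dirac_eq_tsum (fun _ => ENNReal.ofReal_ne_top) hsum]
  simp only [ENNReal.toReal_ofReal (hw₀ _)]

theorem tendsto_tsum_mul_of_tendsto_charFun [Countable ι] [NormedAddCommGroup E]
    [InnerProductSpace ℝ E] [FiniteDimensional ℝ E] [BorelSpace E] {w : ℕ → ι → ℝ} (x : ℕ → ι → E)
    (hw₀ : ∀ n i, 0 ≤ w n i) (hw : ∀ n, HasSum (w n) 1) {P : Measure E} [IsProbabilityMeasure P]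
    (h : ∀ t : E, Tendsto (fun n => ∑' i, Complex.exp (⟪x n i, t⟫_ℝ * Complex.I) * w n i) atTop
      (𝓝 (charFun P t)))
    (f : E →ᵇ ℝ) :
    Tendsto (fun n => ∑' i, f (x n i) * w n i) atTop (𝓝 (∫ y, f y ∂P)) := by
  let Q (n : ℕ) : ProbabilityMeasure E :=
    ⟨discreteMeasure (w n) (x n), isProbabilityMeasure_discreteMeasure (hw₀ n) (hw n) (x n)⟩
  have hQ : Tendsto Q atTop (𝓝 ⟨P, inferInstance⟩) := by
    refine ProbabilityMeasure.tendsto_iff_tendsto_charFun.2 fun t => (h t).congr fun n => ?_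
    rw [charFun_apply]
    refine ((integral_discreteMeasure (hw₀ n) (hw n).summable (x n)
      fun y => (Complex.norm_exp_ofReal_mul_I ⟪y, t⟫_ℝ).le).trans ?_).symm
    exact tsum_congr fun i => by rw [Complex.real_smul, mul_comm]
  refine (ProbabilityMeasure.tendsto_iff_forall_integral_tendsto.1 hQ f).congr fun n => ?_
  refine (integral_discreteMeasure (hw₀ n) (hw n).summable (x n) f.norm_coe_le_norm).trans ?_
  exact tsum_congr fun i => mul_comm _ _

end DiscreteMeasure

section Rescaling

open Topology

lemma integral_gaussianReal_eq_integral_mul_stdGaussian (f : ℝ → ℝ) :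
    ∫ t, f t ∂ProbabilityTheory.gaussianReal 0 1 = ∫ t, f t * stdGaussian t := by
  rw [ProbabilityTheory.integral_gaussianReal_eq_integral_smul (by norm_num)]
  refine integral_congr_ae (ae_of_all _ fun t => ?_)
  simp only [ProbabilityTheory.gaussianPDFReal, stdGaussian, smul_eq_mul, sub_zero, NNReal.coe_one,
    mul_one]
  ring

lemma tendsto_natCast_mul_div_sqrt_sq {v : ℝ} (hv : 0 < v) (t : ℝ) :
    Tendsto (fun n : ℕ => n * (t / √(v * n)) ^ 2) atTop (𝓝 (t ^ 2 / v)) := by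
  refine tendsto_const_nhds.congr' ?_
  filter_upwards [eventually_ne_atTop 0] with n hn
  rw [div_pow, Real.sq_sqrt (by positivity)]
  field_simp

theorem tendsto_charSeries_aX {μ : ℕ → ℤ → ℝ} (hμ : ∀ a d, hasDensity a d (μ a d)) {v : ℝ}
    (hv : 0 < v) {X : ℕ → Bool}
    (hX : Tendsto (birkhoffAverage ℝ shift disagreement · X) atTop (𝓝 v)) (t : ℝ) :
    Tendsto (fun n : ℕ => charSeries (μ (aX X n)) (t / √(v * n))) atTop
      (𝓝 (charFun (ProbabilityTheory.gaussianReal 0 1) t)) := by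
  have h := tendsto_apply_aX_of_tendsto_birkhoffAverage
    (fun n : ℕ => carryRecursion_charSeries hμ (t / √(v * n)))
    (tendsto_natCast_mul_div_sqrt_sq hv t) hX
  rw [div_mul_cancel₀ _ hv.ne'] at h
  simpa [ProbabilityTheory.charFun_gaussianReal] using h

end Rescaling

/-- Central limit theorem for the correlation measures `μ_{a_X(n)}` along a generic
point of an ergodic shift-invariant measure: the measures rescaled by `√(V_ν n)`
converge weakly to `N(0,1)`. Weak convergence is expressed through integrals of
bounded continuous functions; `∫ f dμ̃_{X,n} = ∑_d f(d/√(V_ν n)) μ_{a_X(n)}(d)`. -/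
theorem clt_correlation_measures (ν : Measure (ℕ → Bool)) [IsProbabilityMeasure ν]
    (herg : Ergodic shift ν)
    (h0 : ν ≠ Measure.dirac (fun _ => false))
    (h1 : ν ≠ Measure.dirac (fun _ => true))
    (μ : ℕ → ℤ → ℝ) (hdens : ∀ a d, hasDensity a d (μ a d))
    (Vν : ℝ) (hV : Vν = ∑' i : ℕ, (ν {X | X 0 ≠ X (i + 1)}).toReal / 2 ^ (i + 1)) :
    ∀ᵐ X ∂ν, ∀ f : BoundedContinuousFunction ℝ ℝ,
      Tendsto (fun n : ℕ =>
          ∑' d : ℤ, f ((d : ℝ) / Real.sqrt (Vν * n)) * μ (aX X n) d)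
        atTop (nhds (∫ t : ℝ, f t * stdGaussian t)) := by
  have hmean : ∫ X, disagreement X ∂ν = Vν := hV ▸ (hasSum_integral_disagreement ν).tsum_eq.symm
  have hpos : 0 < Vν := hmean ▸ integral_disagreement_pos herg (Bool.forall_bool.2 ⟨h0, h1⟩)
  filter_upwards [ae_tendsto_birkhoffAverage herg (integrable_disagreement ν)] with X hX f
  rw [hmean] at hX
  rw [← integral_gaussianReal_eq_integral_mul_stdGaussian]
  refine tendsto_tsum_mul_of_tendsto_charFun (fun n (d : ℤ) => (d : ℝ) / √(Vν * n))
    (fun n d => (hdens (aX X n) d).nonneg) (fun n => hasDensity.hasSum_one hdens (aX X n))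
    (P := ProbabilityTheory.gaussianReal 0 1) (fun t => ?_) f
  refine (tendsto_charSeries_aX hdens hpos hX t).congr fun n => tsum_congr fun d => ?_
  rw [RCLike.inner_apply, conj_trivial]
  push_cast
  ring_nf
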